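/- If T is an induced SPN of a complete and decomposable SPN S over Boolean variables X_1,...,X_N whose root has scope {X_1,...,X_N}, then for every variable X_n there is exactly one leaf of S that is an indicator over X_n among the nodes of T. -/

import Mathlib

inductive NodeKind
  | sum
  | prod
  | leaf
deriving DecidableEq

/-- A sum-product network over `N` Boolean variables, with node set `V`:
a rooted DAG (acyclicity witnessed by a rank function) whose leaves are
indicator variables and whose internal nodes are sum or product nodes. -/
structure SPN (V : Type) [Fintype V] [DecidableEq V] (N : ℕ) where
  root : V
  kind : V → NodeKind
  children : V → Finset V
  leaf_children : ∀ v, kind v = NodeKind.leaf → children v = ∅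
  internal_nonempty : ∀ v, kind v ≠ NodeKind.leaf → (children v).Nonempty
  root_no_parent : ∀ u, root ∉ children u
  leafVar : V → Fin N
  leafSign : V → Bool
  rank : V → ℕ
  rank_lt : ∀ v, ∀ u ∈ children v, rank u < rank v

namespace SPN

variable {V : Type} [Fintype V] [DecidableEq V] {N : ℕ}

/-- The value `f_v(·|w)` of every node, where `w` assigns a weight to every
edge `(v,u)` out of a sum node and `L` gives the value of every leaf. -/
noncomputable def evalWith (S : SPN V N) (w : V × V → ℝ) (L : V → ℝ) (v : V) : ℝ :=
  match S.kind v with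
  | NodeKind.leaf => L v
  | NodeKind.sum => ∑ u ∈ (S.children v).attach, w (v, u.1) * S.evalWith w L u.1
  | NodeKind.prod => ∏ u ∈ (S.children v).attach, S.evalWith w L u.1
termination_by S.rank v
decreasing_by
  · exact S.rank_lt v u.1 u.2
  · exact S.rank_lt v u.1 u.2

/-- The leaf values determined by an input `x ∈ {0,1}^N`: the leaf over
variable `X_n` is the indicator `I[x_n = leafSign]`. -/
def ind (S : SPN V N) (x : Fin N → Bool) (v : V) : ℝ :=
  if x (S.leafVar v) = S.leafSign v then 1 else 0

/-- The scope of a node: its variable at a leaf, the union of the scopes of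
the children at an internal node. -/
noncomputable def scope (S : SPN V N) (v : V) : Finset (Fin N) :=
  match S.kind v with
  | NodeKind.leaf => {S.leafVar v}
  | NodeKind.sum => (S.children v).attach.sup fun u => S.scope u.1
  | NodeKind.prod => (S.children v).attach.sup fun u => S.scope u.1
termination_by S.rank v
decreasing_by
  · exact S.rank_lt v u.1 u.2
  · exact S.rank_lt v u.1 u.2

/-- An SPN is complete if all children of every sum node have the same scope. -/
def Complete (S : SPN V N) : Prop :=
  ∀ v, S.kind v = NodeKind.sum →
    ∀ u₁ ∈ S.children v, ∀ u₂ ∈ S.children v, S.scope u₁ = S.scope u₂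

/-- An SPN is decomposable if the children of every product node have
pairwise disjoint scopes. -/
def Decomposable (S : SPN V N) : Prop :=
  ∀ v, S.kind v = NodeKind.prod →
    ∀ u₁ ∈ S.children v, ∀ u₂ ∈ S.children v, u₁ ≠ u₂ →
      Disjoint (S.scope u₁) (S.scope u₂)

/-- `(TV, TE)` is an induced SPN (induced tree) of `S`: a subgraph of `S`,
generated from the root, containing exactly one child of every sum node it
contains and all children of every product node it contains, together with
the corresponding edges. -/
structure IsInducedTree (S : SPN V N) (TV : Finset V) (TE : Finset (V × V)) : Prop where
  root_mem : S.root ∈ TV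
  edges_sub : ∀ e ∈ TE, e.1 ∈ TV ∧ e.2 ∈ TV ∧ e.2 ∈ S.children e.1
  reach : ∀ v ∈ TV, v ≠ S.root → ∃ u, (u, v) ∈ TE
  sum_unique : ∀ v ∈ TV, S.kind v = NodeKind.sum → ∃! u, u ∈ S.children v ∧ u ∈ TV
  sum_edge : ∀ v ∈ TV, S.kind v = NodeKind.sum → ∀ u ∈ S.children v, u ∈ TV → (v, u) ∈ TE
  prod_mem : ∀ v ∈ TV, S.kind v = NodeKind.prod → ∀ u ∈ S.children v, u ∈ TV
  prod_edge : ∀ v ∈ TV, S.kind v = NodeKind.prod → ∀ u ∈ S.children v, (v, u) ∈ TE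

end SPN

namespace SPN

/-- The child relation restricted to the nodes of `T`. -/
def TStep {V : Type} [Fintype V] [DecidableEq V] {N : ℕ} (S : SPN V N) (TV : Finset V)
    (u v : V) : Prop := u ∈ TV ∧ v ∈ TV ∧ v ∈ S.children u

theorem scope_leaf_eq {V : Type} [Fintype V] [DecidableEq V] {N : ℕ} (S : SPN V N) (v : V)
    (h : S.kind v = NodeKind.leaf) : S.scope v = {S.leafVar v} := by
  rw [scope]; simp [h]

theorem mem_scope_internal {V : Type} [Fintype V] [DecidableEq V] {N : ℕ} (S : SPN V N) (v : V)
    (h : S.kind v ≠ NodeKind.leaf) (n : Fin N) :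
    n ∈ S.scope v ↔ ∃ u ∈ S.children v, n ∈ S.scope u := by
  rw [scope]
  cases hk : S.kind v with
  | leaf => exact absurd hk h
  | sum => simp [Finset.mem_sup]
  | prod => simp [Finset.mem_sup]

theorem scope_mono_reach {V : Type} [Fintype V] [DecidableEq V] {N : ℕ} (S : SPN V N)
    (TV : Finset V) (n : Fin N) {u v : V} (h : Relation.ReflTransGen (S.TStep TV) u v)
    (hv : n ∈ S.scope v) : n ∈ S.scope u := by
  induction h using Relation.ReflTransGen.head_induction_on with
  | refl => exact hv
  | head hs _ ih =>
    refine (S.mem_scope_internal _ ?_ n).2 ⟨_, hs.2.2, ih⟩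
    intro hl
    have := hs.2.2
    rw [S.leaf_children _ hl] at this
    simp at this

theorem root_reaches {V : Type} [Fintype V] [DecidableEq V] {N : ℕ} (S : SPN V N)
    (TV : Finset V) (TE : Finset (V × V)) (hT : S.IsInducedTree TV TE) :
    ∀ (k : ℕ) (v : V), v ∈ TV → Finset.univ.sup S.rank - S.rank v ≤ k →
      Relation.ReflTransGen (S.TStep TV) S.root v := by
  intro k
  induction k with
  | zero =>
    intro v hv hk
    by_cases hr : v = S.root
    · rw [hr]
    · obtain ⟨u, hu⟩ := hT.reach v hv hr
      have h1 := S.rank_lt _ _ (hT.edges_sub _ hu).2.2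
      have h2 : S.rank u ≤ Finset.univ.sup S.rank := Finset.le_sup (Finset.mem_univ u)
      simp only at h1
      omega
  | succ k ih =>
    intro v hv hk
    by_cases hr : v = S.root
    · rw [hr]
    · obtain ⟨u, hu⟩ := hT.reach v hv hr
      obtain ⟨a, b, c⟩ := hT.edges_sub _ hu
      have h1 := S.rank_lt _ _ c
      have h2 : S.rank u ≤ Finset.univ.sup S.rank := Finset.le_sup (Finset.mem_univ u)
      simp only at h1
      exact (ih u a (by omega)).tail ⟨a, b, c⟩

theorem unique_leaf_below {V : Type} [Fintype V] [DecidableEq V] {N : ℕ} (S : SPN V N)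
    (hC : S.Complete) (hD : S.Decomposable)
    (TV : Finset V) (TE : Finset (V × V)) (hT : S.IsInducedTree TV TE) (n : Fin N) :
    ∀ (k : ℕ) (u : V), S.rank u ≤ k → u ∈ TV → n ∈ S.scope u →
      ∃! v, Relation.ReflTransGen (S.TStep TV) u v ∧ S.kind v = NodeKind.leaf ∧
        S.leafVar v = n := by
  intro k
  induction k using Nat.strong_induction_on with
  | _ k ih =>
  intro u hk hu hn
  by_cases hl : S.kind u = NodeKind.leaf
  · rw [S.scope_leaf_eq u hl] at hn
    refine ⟨u, ⟨.refl, hl, (Finset.mem_singleton.1 hn).symm⟩, ?_⟩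
    rintro v ⟨hv, -, -⟩
    rcases hv.cases_head with h | ⟨c, hc, -⟩
    · exact h.symm
    · have := hc.2.2
      rw [S.leaf_children _ hl] at this
      simp at this
  · -- a unique relevant child in the tree
    obtain ⟨c, hc, hcT, hcn, huniq⟩ : ∃ c, c ∈ S.children u ∧ c ∈ TV ∧ n ∈ S.scope c ∧
        ∀ d ∈ S.children u, d ∈ TV → n ∈ S.scope d → d = c := by
      obtain ⟨c, hc, hcn⟩ := (S.mem_scope_internal u hl n).1 hn
      cases hkd : S.kind u with
      | leaf => exact absurd hkd hl
      | sum =>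
        obtain ⟨d, ⟨hd, hdT⟩, hdu⟩ := hT.sum_unique u hu hkd
        exact ⟨d, hd, hdT, hC u hkd c hc d hd ▸ hcn, fun e he heT _ => hdu e ⟨he, heT⟩⟩
      | prod =>
        refine ⟨c, hc, hT.prod_mem u hu hkd c hc, hcn, fun d hd _ hdn => ?_⟩
        by_contra hne
        exact Finset.disjoint_left.1 (hD u hkd d hd c hc hne) hdn hcn
    have hlt := S.rank_lt u c hc
    obtain ⟨v, ⟨hv, hvl, hvn⟩, hvu⟩ := ih (S.rank c) (by omega) c le_rfl hcT hcn
    refine ⟨v, ⟨hv.head ⟨hu, hcT, hc⟩, hvl, hvn⟩, ?_⟩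
    rintro w ⟨hw, hwl, hwn⟩
    rcases hw.cases_head with h | ⟨d, hd, hdw⟩
    · exact absurd (h ▸ hwl) hl
    · have hdn : n ∈ S.scope d := S.scope_mono_reach TV n hdw (by
        rw [S.scope_leaf_eq w hwl, hwn]; simp)
      have := huniq d hd.2.2 hd.2.1 hdn
      subst this
      exact hvu w ⟨hdw, hwl, hwn⟩

end SPN

/-- If `T = (TV, TE)` is an induced SPN of a complete and
decomposable SPN `S` over Boolean variables `X_1, …, X_N` whose root has scope
`{X_1, …, X_N}`, then for every variable `X_n` there is exactly one leaf of `S`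
that is an indicator over `X_n` among the nodes of `T`. -/
theorem induced_spn_unique_indicator_per_variable
    {V : Type} [Fintype V] [DecidableEq V] {N : ℕ} (S : SPN V N)
    (hC : S.Complete) (hD : S.Decomposable)
    (hroot : S.scope S.root = Finset.univ)
    (TV : Finset V) (TE : Finset (V × V)) (hT : S.IsInducedTree TV TE) :
    ∀ n : Fin N, ∃! v, v ∈ TV ∧ S.kind v = NodeKind.leaf ∧ S.leafVar v = n := by
  intro n
  obtain ⟨v, ⟨hv, hvl, hvn⟩, hu⟩ := S.unique_leaf_below hC hD TV TE hT n _ S.root le_rfl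
    hT.root_mem (by rw [hroot]; simp)
  refine ⟨v, ⟨?_, hvl, hvn⟩, ?_⟩
  · rcases hv.cases_tail with h | ⟨c, -, hc⟩
    · rw [h]; exact hT.root_mem
    · exact hc.2.1
  · rintro w ⟨hw, hwl, hwn⟩
    exact hu w ⟨S.root_reaches TV TE hT _ w hw le_rfl, hwl, hwn⟩
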